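/- Let R be a ring. The following are equivalent: (1) R has a left Artinian left quotient ring Q = C⁻¹R; (2) the conditions hold: (a) R̄ is a left Goldie ring, (b) n is a nilpotent ideal, (c) C' ⊆ C, (e) for every c̄ ∈ C̄ the right multiplication map f_i → f_i, f ↦ f·c̄, is injective for all i ≥ 1, together with either of the following: (d1) the left R̄-modules f_i, i ≥ 1, satisfy the ascending chain condition on C̄-closed submodules, or (d2) the left R̄-modules f_i, i ≥ 1, satisfy the descending chain condition on C̄-closed submodules. -/

import Mathlib

open Function

universe u v

/-- A regular element of a ring: a two-sided non-zero-divisor. -/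
def IsRegElem {R : Type*} [Ring R] (c : R) : Prop :=
  (∀ x : R, c * x = 0 → x = 0) ∧ (∀ x : R, x * c = 0 → x = 0)

/-- The set `C` of regular elements of a ring. -/
def regSet (R : Type*) [Ring R] : Set R := {c : R | IsRegElem c}

/-- A (left) ideal is two-sided. -/
def Ideal.IsTwoSidedNC {R : Type*} [Ring R] (I : Ideal R) : Prop :=
  ∀ a ∈ I, ∀ r : R, a * r ∈ I

/-- A prime (two-sided) ideal of a possibly noncommutative ring. -/
def Ideal.IsPrimeNC {R : Type*} [Ring R] (P : Ideal R) : Prop :=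
  P ≠ ⊤ ∧ P.IsTwoSidedNC ∧ ∀ a b : R, (∀ r : R, a * r * b ∈ P) → a ∈ P ∨ b ∈ P

/-- The prime radical `n` of a ring: the intersection of all prime ideals. -/
def primeRadical (R : Type*) [Ring R] : Ideal R := sInf {P : Ideal R | P.IsPrimeNC}

/-- `n` is a nilpotent ideal. -/
def IsNilpotentIdeal {R : Type*} [Ring R] (I : Ideal R) : Prop := ∃ k : ℕ, I ^ (k + 1) = ⊥

/-- `φ : R →+* Q` realizes `Q` as a left quotient ring `C⁻¹R` of `R`:  `R` embeds in `Q`,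
every regular element of `R` becomes invertible in `Q`, and every element of `Q` has the
form `(φ c)⁻¹ * (φ r)` with `c` regular. -/
structure IsLeftQuotRing {R : Type u} {Q : Type v} [Ring R] [Ring Q] (φ : R →+* Q) : Prop where
  inj : Function.Injective φ
  isUnit : ∀ c : R, IsRegElem c → IsUnit (φ c)
  denom : ∀ q : Q, ∃ c r : R, IsRegElem c ∧ φ c * q = φ r

/-- Data of a left quotient ring of `R`. -/
structure LeftQuotData (R : Type u) [Ring R] : Type (u + 1) where
  Q : Type u
  [instQ : Ring Q]
  φ : R →+* Q
  quot : IsLeftQuotRing φ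

attribute [instance] LeftQuotData.instQ

/-- `R` has a left Artinian left quotient ring `Q = C⁻¹R`. -/
def HasArtinianLeftQuot (R : Type u) [Ring R] : Prop :=
  ∃ d : LeftQuotData R, IsArtinianRing d.Q

/-- A subset of a ring is a left annihilator. -/
def IsLeftAnnihilatorSet {R : Type*} [Ring R] (A : Set R) : Prop :=
  ∃ S : Set R, A = {r : R | ∀ s ∈ S, r * s = 0}

/-- The ascending chain condition on left annihilators. -/
def ACCLeftAnnihilators (R : Type*) [Ring R] : Prop :=
  ∀ f : ℕ → Set R, (∀ i, IsLeftAnnihilatorSet (f i)) → (∀ i j, i ≤ j → f i ⊆ f j) →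
    ∃ N, ∀ k, N ≤ k → f k = f N

/-- The module `M` contains no infinite direct sum of nonzero submodules. -/
def NoInfiniteIndepFamily (R : Type*) (M : Type*) [Ring R] [AddCommGroup M] [Module R M] : Prop :=
  ¬ ∃ f : ℕ → Submodule R M, (∀ i, f i ≠ ⊥) ∧ iSupIndep f

/-- A left Goldie ring: ACC on left annihilators and no infinite direct sums of nonzero
left ideals. -/
def IsLeftGoldie (R : Type*) [Ring R] : Prop :=
  ACCLeftAnnihilators R ∧ NoInfiniteIndepFamily R R

/-- The subquotient `n^i/n^{i+1}` of `R` determined by the prime radical `n`. -/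
abbrev grPiece (R : Type*) [Ring R] (i : ℕ) :=
  ↥(primeRadical R ^ i) ⧸
    (Submodule.comap (primeRadical R ^ i : Ideal R).subtype (primeRadical R ^ (i + 1)))

/-- The class of `x ∈ n^i` in `n^i/n^{i+1}`. -/
def grMk {R : Type*} [Ring R] (i : ℕ) (x : R) (hx : x ∈ primeRadical R ^ i) : grPiece R i :=
  Submodule.Quotient.mk ⟨x, hx⟩

/-- The `C̄`-torsion submodule `τ_i` of `n^i/n^{i+1}` (take the span, which coincides with the
set of torsion elements whenever the latter is a submodule, e.g. when `C̄` is a left Ore set);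
here `C̄` is represented through `π : R → R̄` as `{c : R | IsRegElem (π c)}`. -/
def tauSub {R : Type u} {Rbar : Type v} [Ring R] [Ring Rbar] (π : R →+* Rbar) (i : ℕ) :
    Submodule R (grPiece R i) :=
  Submodule.span R {u : grPiece R i | ∃ c : R, IsRegElem (π c) ∧ c • u = 0}

/-- The `C̄`-torsionfree module `f_i = (n^i/n^{i+1})/τ_i`. -/
abbrev fMod {R : Type u} {Rbar : Type v} [Ring R] [Ring Rbar] (π : R →+* Rbar) (i : ℕ) :=
  grPiece R i ⧸ tauSub π i

/-- The class of `x ∈ n^i` in `f_i`. -/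
def fMk {R : Type u} {Rbar : Type v} [Ring R] [Ring Rbar] (π : R →+* Rbar) (i : ℕ) (x : R)
    (hx : x ∈ primeRadical R ^ i) : fMod π i :=
  Submodule.Quotient.mk (grMk i x hx)

/-- The subset `C⁻¹K = {(φ c)⁻¹ (φ a) : c ∈ C, a ∈ K}` of a left quotient ring. -/
def locSet {R : Type u} {Q : Type v} [Ring R] [Ring Q] (φ : R →+* Q) (K : Ideal R) : Set Q :=
  {q : Q | ∃ c a : R, IsRegElem c ∧ a ∈ K ∧ φ c * q = φ a}

/-- A subset of a ring is a left Ore set (multiplicatively closed and satisfying the left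
Ore condition). -/
def IsLeftOreSubset {A : Type*} [Ring A] (S : Set A) : Prop :=
  (1 : A) ∈ S ∧ (∀ s ∈ S, ∀ t ∈ S, s * t ∈ S) ∧
    ∀ s ∈ S, ∀ a : A, ∃ t ∈ S, ∃ b : A, t * a = b * s

/-- A left denominator set. -/
def IsLeftDenominatorSet {A : Type*} [Ring A] (S : Set A) : Prop :=
  IsLeftOreSubset S ∧ ∀ a : A, ∀ s ∈ S, a * s = 0 → ∃ t ∈ S, t * a = 0


/-- A submodule `N` of an `R̄`-module is `C̄`-closed (with `C̄` represented via `π` as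
`{c : R | IsRegElem (π c)}`): `c̄ • m ∈ N` implies `m ∈ N`. -/
def IsCbarClosedSubmodule {R : Type u} {Rbar : Type v} [Ring R] [Ring Rbar] (π : R →+* Rbar)
    {M : Type*} [AddCommGroup M] [Module R M] (N : Submodule R M) : Prop :=
  ∀ c : R, IsRegElem (π c) → ∀ m : M, c • m ∈ N → m ∈ N

/-! `S⁻¹M` satisfies a chain condition exactly when `M` satisfies it up to denominators from `S`, a
notion which makes sense before the left Ore condition is known. If `f_i` is Noetherian up to `C'`,
then, being torsion-free, it contains no infinite direct sum, and is thus Artinian up to `C'` by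
Goldie's theorem for `R̄`. So (d1) and (d2) both make every `f_i`, hence `R`, Artinian up to `C'`.

An injective endomorphism of a module that is Artinian up to `S` is surjective up to `S`. Applied to
right multiplication by `c ∈ C'` on `f_i`, this lifts the left Ore condition from `R/n^i` to
`R/n^(i+1)`, so by nilpotency of `n` the localization of `R` at `C'` exists and is left Artinian.
Conversely, applied to right multiplication by `c ∈ C` on left ideals of `R`, it replaces the
right-hand denominators that appear when comparing ideals of `R` and `Q`: primes of `Q` contract to
primes of `R`, whence `n` is the contraction of the nilpotent prime radical of `Q`. -/

open scoped nonZeroDivisors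

section ChainConditionsUpTo

variable {R : Type*} [Ring R] {S : Submonoid R} {M : Type*} [AddCommGroup M] [Module R M]

/-- `N` lies in `N'` up to denominators from `S`. When `S` is the set of denominators of a ring of
fractions, this is the inclusion of localizations `S⁻¹N ⊆ S⁻¹N'`, expressed inside `M`. -/
def LeUpTo (S : Submonoid R) (N N' : Submodule R M) : Prop :=
  ∀ x ∈ N, ∃ s ∈ S, s • x ∈ N'

/-- The descending chain condition for submodules up to denominators from `S`. -/
def IsArtinianUpTo (S : Submonoid R) (M : Type*) [AddCommGroup M] [Module R M] : Prop :=
  ∀ K : ℕ → Submodule R M, Antitone K → ∃ n, ∀ m ≥ n, LeUpTo S (K n) (K m)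

/-- The ascending chain condition for submodules up to denominators from `S`. -/
def IsNoetherianUpTo (S : Submonoid R) (M : Type*) [AddCommGroup M] [Module R M] : Prop :=
  ∀ K : ℕ → Submodule R M, Monotone K → ∃ n, ∀ m ≥ n, LeUpTo S (K m) (K n)

section Transfer

variable {M' : Type*} [AddCommGroup M'] [Module R M']
  {R' : Type*} [Ring R'] {S' : Submonoid R'} {σ : R →+* R'}
  {M'' : Type*} [AddCommGroup M''] [Module R' M'']

theorem LeUpTo.of_map_of_injective {f : M' →ₗ[R] M} (hf : Injective f) {N N' : Submodule R M'}
    (h : LeUpTo S (N.map f) (N'.map f)) : LeUpTo S N N' := by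
  intro x hx
  obtain ⟨s, hs, y, hy, hyx⟩ := h (f x) (Submodule.mem_map_of_mem hx)
  rw [← map_smul] at hyx
  exact ⟨s, hs, hf hyx ▸ hy⟩

theorem LeUpTo.of_comap_of_surjective {g : M →ₛₗ[σ] M''} (hg : Surjective g)
    (hS : S ≤ S'.comap σ) {N N' : Submodule R' M''} (h : LeUpTo S (N.comap g) (N'.comap g)) :
    LeUpTo S' N N' := by
  intro x hx
  obtain ⟨y, rfl⟩ := hg x
  obtain ⟨s, hs, hsy⟩ := h y hx
  exact ⟨σ s, hS hs, by rwa [Submodule.mem_comap, map_smulₛₗ] at hsy⟩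

theorem IsArtinianUpTo.of_injective (h : IsArtinianUpTo S M) (f : M' →ₗ[R] M) (hf : Injective f) :
    IsArtinianUpTo S M' := by
  intro K hK
  obtain ⟨n, hn⟩ := h (fun i => (K i).map f) fun i j hij => Submodule.map_mono (hK hij)
  exact ⟨n, fun m hm => (hn m hm).of_map_of_injective hf⟩

theorem IsNoetherianUpTo.of_injective (h : IsNoetherianUpTo S M) (f : M' →ₗ[R] M)
    (hf : Injective f) : IsNoetherianUpTo S M' := by
  intro K hK
  obtain ⟨n, hn⟩ := h (fun i => (K i).map f) fun i j hij => Submodule.map_mono (hK hij)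
  exact ⟨n, fun m hm => (hn m hm).of_map_of_injective hf⟩

theorem IsArtinianUpTo.of_surjective (h : IsArtinianUpTo S M) (g : M →ₛₗ[σ] M'')
    (hg : Surjective g) (hS : S ≤ S'.comap σ) : IsArtinianUpTo S' M'' := by
  intro K hK
  obtain ⟨n, hn⟩ := h (fun i => (K i).comap g) fun i j hij => Submodule.comap_mono (hK hij)
  exact ⟨n, fun m hm => (hn m hm).of_comap_of_surjective hg hS⟩

theorem IsNoetherianUpTo.of_surjective (h : IsNoetherianUpTo S M) (g : M →ₛₗ[σ] M'')
    (hg : Surjective g) (hS : S ≤ S'.comap σ) : IsNoetherianUpTo S' M'' := by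
  intro K hK
  obtain ⟨n, hn⟩ := h (fun i => (K i).comap g) fun i j hij => Submodule.comap_mono (hK hij)
  exact ⟨n, fun m hm => (hn m hm).of_comap_of_surjective hg hS⟩

theorem IsArtinianUpTo.of_ker_le_range [RingHomSurjective σ] (f : M' →ₗ[R] M) (g : M →ₛₗ[σ] M'')
    (hfg : LinearMap.ker g ≤ LinearMap.range f) (hS : S'.comap σ ≤ S)
    (h' : IsArtinianUpTo S M') (h'' : IsArtinianUpTo S' M'') : IsArtinianUpTo S M := by
  intro K hK
  obtain ⟨n', hn'⟩ := h' (fun i => (K i).comap f) fun i j hij => Submodule.comap_mono (hK hij)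
  obtain ⟨n'', hn''⟩ := h'' (fun i => (K i).map g) fun i j hij => Submodule.map_mono (hK hij)
  refine ⟨max n' n'', fun m hm x hx => ?_⟩
  obtain ⟨s', hs', z, hz, hzx⟩ := hn'' m (le_of_max_le_right hm) (g x)
    (Submodule.mem_map_of_mem (hK (le_max_right _ _) hx))
  obtain ⟨s, rfl⟩ := RingHomSurjective.is_surjective (σ := σ) s'
  obtain ⟨y, hy⟩ : s • x - z ∈ LinearMap.range f :=
    hfg (by rw [LinearMap.mem_ker, map_sub, map_smulₛₗ, hzx, sub_self])
  have hyK : f y ∈ K n' := by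
    rw [hy]
    exact sub_mem ((K n').smul_mem s (hK (le_max_left _ _) hx)) (hK (le_of_max_le_left hm) hz)
  obtain ⟨t, ht, hty⟩ := hn' m (le_of_max_le_left hm) y hyK
  refine ⟨t * s, S.mul_mem ht (hS hs'), ?_⟩
  rw [Submodule.mem_comap, map_smul, hy, smul_sub] at hty
  rw [mul_smul]
  simpa only [sub_add_cancel] using add_mem hty ((K m).smul_mem t hz)

end Transfer

theorem IsArtinianUpTo.of_forall_exists_smul_eq_zero (h : ∀ x : M, ∃ s ∈ S, s • x = 0) :
    IsArtinianUpTo S M := by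
  refine fun K _ => ⟨0, fun m _ x _ => ?_⟩
  obtain ⟨s, hs, hsx⟩ := h x
  exact ⟨s, hs, hsx ▸ (K m).zero_mem⟩

theorem IsArtinianUpTo.exists_smul_mem_range (h : IsArtinianUpTo S M) {f : M →ₗ[R] M}
    (hf : Injective f) (x : M) : ∃ s ∈ S, s • x ∈ LinearMap.range f := by
  obtain ⟨n, hn⟩ := h _ (LinearMap.iterateRange f).monotone
  obtain ⟨s, hs, y, hy⟩ := hn (n + 1) n.le_succ ((f ^ n) x) ⟨x, rfl⟩
  refine ⟨s, hs, y, (Module.End.iterate_injective hf n) ?_⟩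
  rw [map_smul, ← hy, pow_succ, Module.End.mul_apply]

end ChainConditionsUpTo

section IndependentFamilies

variable {R : Type*} [Ring R] {M : Type*} [AddCommGroup M] [Module R M]

/-- Essentiality of `N' ⊓ N` in `N`, phrased elementwise. -/
def IsEssentialIn (N' N : Submodule R M) : Prop :=
  ∀ x ∈ N, x ≠ 0 → ∃ r : R, r • x ∈ N' ∧ r • x ≠ 0

theorem iSupIndep_of_antitone_disjoint {X N : ℕ → Submodule R M} (hN : Antitone N)
    (hX : ∀ k, X k ≤ N k) (hd : ∀ k, Disjoint (X k) (N (k + 1))) : iSupIndep X := by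
  rw [iSupIndep_iff_finsetSum_eq_zero_imp_eq_zero]
  intro s
  induction s using Finset.induction_on_min with
  | empty => simp
  | insert a s ha ih =>
    intro v hv h0
    rw [Finset.sum_insert (fun h => lt_irrefl _ (ha a h))] at h0
    have hs : ∑ i ∈ s, v i ∈ N (a + 1) :=
      Submodule.sum_mem _ fun i hi =>
        hN (Nat.succ_le_of_lt (ha i hi)) (hX i (hv i (Finset.mem_insert_of_mem hi)))
    have hva : v a = 0 := by
      refine Submodule.disjoint_def.1 (hd a) _ (hv a (Finset.mem_insert_self _ _)) ?_
      rw [eq_neg_of_add_eq_zero_left h0]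
      exact neg_mem hs
    rw [hva, zero_add] at h0
    intro i hi
    rcases Finset.mem_insert.1 hi with rfl | hi
    · exact hva
    · exact ih v (fun i hi => hv i (Finset.mem_insert_of_mem hi)) h0 i hi

theorem NoInfiniteIndepFamily.exists_forall_isEssentialIn (h : NoInfiniteIndepFamily R M)
    {T : Set (Submodule R M)} (hT : T.Nonempty) :
    ∃ N ∈ T, ∀ N' ∈ T, N' ≤ N → IsEssentialIn N' N := by
  by_contra! hcon
  simp only [IsEssentialIn, not_forall, not_exists, not_and, not_not] at hcon
  choose! next hnextT hnext x hxN hx0 hx using hcon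
  obtain ⟨N₀, hN₀⟩ := hT
  have hT' : ∀ k, next^[k] N₀ ∈ T := fun k => by
    induction k with
    | zero => exact hN₀
    | succ k ih => rw [iterate_succ_apply']; exact hnextT _ ih
  refine h ⟨fun k => Submodule.span R {x (next^[k] N₀)}, fun k => ?_,
    iSupIndep_of_antitone_disjoint (N := fun k => next^[k] N₀)
      (antitone_nat_of_succ_le fun k => ?_) (fun k => ?_) fun k => ?_⟩
  · exact mt Submodule.span_singleton_eq_bot.1 (hx0 _ (hT' k))
  · rw [iterate_succ_apply']
    exact hnext _ (hT' k)
  · exact (Submodule.span_singleton_le_iff_mem _ _).2 (hxN _ (hT' k))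
  · rw [Submodule.disjoint_def]
    intro y hy hyN
    obtain ⟨r, rfl⟩ := Submodule.mem_span_singleton.1 hy
    rw [iterate_succ_apply'] at hyN
    exact hx _ (hT' k) r hyN

theorem NoInfiniteIndepFamily.isEssentialIn_range (h : NoInfiniteIndepFamily R M)
    {f : M →ₗ[R] M} (hf : Injective f) : IsEssentialIn (LinearMap.range f) ⊤ := by
  obtain ⟨_, ⟨n, rfl⟩, hn⟩ := h.exists_forall_isEssentialIn
    (Set.range_nonempty fun k : ℕ => LinearMap.range (f ^ k))
  intro x _ hx
  have hfn : Injective (f ^ n) := Module.End.iterate_injective hf n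
  obtain ⟨r, ⟨y, hy⟩, hr⟩ := hn _ ⟨n + 1, rfl⟩ ((LinearMap.iterateRange f).monotone n.le_succ)
    ((f ^ n) x) ⟨x, rfl⟩ ((map_ne_zero_iff _ hfn).2 hx)
  rw [← map_smul] at hy hr
  refine ⟨r, ⟨y, hfn ?_⟩, (map_ne_zero_iff _ hfn).1 hr⟩
  rw [← hy, pow_succ, Module.End.mul_apply]

theorem IsEssentialIn.comap {M' : Type*} [AddCommGroup M'] [Module R M'] {N' N : Submodule R M}
    (h : IsEssentialIn N' N) (f : M' →ₗ[R] M) : IsEssentialIn (N'.comap f) (N.comap f) := by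
  intro x hx hx0
  by_cases hfx : f x = 0
  · exact ⟨1, by simp [hfx], by simpa using hx0⟩
  · obtain ⟨r, hr, hr0⟩ := h (f x) hx hfx
    rw [← map_smul] at hr hr0
    exact ⟨r, hr, ne_zero_of_map hr0⟩

theorem IsNoetherianUpTo.noInfiniteIndepFamily {S : Submonoid R} (h : IsNoetherianUpTo S M)
    (hS : ∀ s ∈ S, ∀ x : M, s • x = 0 → x = 0) : NoInfiniteIndepFamily R M := by
  rintro ⟨f, hf0, hf⟩
  obtain ⟨n, hn⟩ := h (fun k => ⨆ i < k, f i) fun k l hkl =>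
    biSup_mono fun i hi => lt_of_lt_of_le hi hkl
  have hdisj : Disjoint (f n) (⨆ i < n, f i) :=
    (hf n).mono_right (biSup_mono fun i hi => ne_of_lt hi)
  refine hf0 n ((Submodule.eq_bot_iff _).2 fun x hx => ?_)
  obtain ⟨s, hs, hsx⟩ := hn (n + 1) n.le_succ x
    (le_iSup₂ (f := fun i (_ : i < n + 1) => f i) n n.lt_succ_self hx)
  exact hS s hs x (Submodule.disjoint_def.1 hdisj _ ((f n).smul_mem s hx) hsx)

end IndependentFamilies

section Goldie

variable {A : Type*} [Ring A]

/-- The left annihilator of an element. -/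
abbrev leftAnn (x : A) : Ideal A := Ideal.torsionOf A A x

theorem mem_leftAnn {x r : A} : r ∈ leftAnn x ↔ r * x = 0 := Iff.rfl

theorem leftAnn_le_leftAnn_mul (x y : A) : leftAnn x ≤ leftAnn (x * y) := by
  intro r hr
  rw [mem_leftAnn] at *
  rw [← mul_assoc, hr, zero_mul]

theorem ACCLeftAnnihilators.exists_maximal (h : ACCLeftAnnihilators A) {T : Set A}
    (hT : T.Nonempty) : ∃ x ∈ T, ∀ y ∈ T, leftAnn x ≤ leftAnn y → leftAnn y ≤ leftAnn x := by
  have hwf : WellFoundedGT {I : Ideal A // IsLeftAnnihilatorSet (I : Set A)} := by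
    rw [wellFoundedGT_iff_monotone_chain_condition]
    intro f
    obtain ⟨n, hn⟩ := h (fun i => (f i).1) (fun i => (f i).2) fun i j hij => f.monotone hij
    exact ⟨n, fun m hm => Subtype.ext (SetLike.coe_injective (hn m hm).symm)⟩
  let F : A → {I : Ideal A // IsLeftAnnihilatorSet (I : Set A)} := fun x =>
    ⟨leftAnn x, {x}, by ext r; simp⟩
  obtain ⟨_, ⟨x, hx, rfl⟩, hmax⟩ := hwf.wf.has_min (F '' T) (hT.image F)
  refine ⟨x, hx, fun y hy hle => ?_⟩
  by_contra hcon
  exact hmax (F y) ⟨y, hy, rfl⟩ (lt_of_le_not_ge hle hcon)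

/-- A semiprime ring, not necessarily commutative. -/
def IsSemiprimeRing (A : Type*) [Ring A] : Prop :=
  ∀ a : A, (∀ r : A, a * r * a = 0) → a = 0

namespace IsSemiprimeRing

variable (hA : IsSemiprimeRing A) (hacc : ACCLeftAnnihilators A)
include hA hacc

theorem eq_zero_of_forall_isNilpotent_mul {a : A} (ha : ∀ r : A, IsNilpotent (r * a)) :
    a = 0 := by
  by_contra ha0
  obtain ⟨x, ⟨hx0, b, rfl⟩, hmax⟩ := hacc.exists_maximal (T := {y | y ≠ 0 ∧ ∃ b, y = a * b})
    ⟨a, ha0, 1, (mul_one a).symm⟩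
  refine hx0 (hA _ fun r => ?_)
  set y := a * b * r with hy
  have hnil : ∃ k, y ^ k * (a * b) = 0 := by
    obtain ⟨k, hk⟩ := ha (b * r)
    exact ⟨k, by rw [← mul_assoc, hy, mul_assoc a b r, mul_pow_mul, hk, mul_zero, zero_mul]⟩
  classical
  obtain ⟨k, hk⟩ : ∃ k, Nat.find hnil = k + 1 :=
    Nat.exists_eq_succ_of_ne_zero fun h0 => hx0 (by simpa [h0] using Nat.find_spec hnil)
  have hne : y ^ k * (a * b) ≠ 0 := Nat.find_min hnil (by omega)
  have hzero : y ∈ leftAnn (y ^ k * (a * b)) := by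
    rw [mem_leftAnn, ← mul_assoc, ← pow_succ', ← hk]
    exact Nat.find_spec hnil
  rw [hy, mul_pow_mul] at hne hzero
  exact hmax _ ⟨hne, _, mul_assoc _ _ _⟩ (leftAnn_le_leftAnn_mul _ _) hzero

theorem eq_zero_of_isEssentialIn_leftAnn {x : A} (hx : IsEssentialIn (leftAnn x) ⊤) : x = 0 := by
  refine hA.eq_zero_of_forall_isNilpotent_mul hacc fun r => ?_
  have hz : IsEssentialIn (leftAnn (r * x)) ⊤ := by
    intro t _ ht
    obtain ⟨s, hs, hs0⟩ := hx.comap (LinearMap.toSpanSingleton A A r) t trivial ht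
    exact ⟨s, by simpa [mul_assoc] using hs, hs0⟩
  generalize r * x = z at hz
  obtain ⟨_, ⟨k, rfl⟩, hmax⟩ := hacc.exists_maximal (Set.range_nonempty fun k : ℕ => z ^ k)
  by_contra hnil
  obtain ⟨t, htz, ht⟩ := hz (z ^ k) trivial fun hk => hnil ⟨k, hk⟩
  refine ht (hmax (z ^ (k + 1)) ⟨k + 1, rfl⟩ ?_ ?_)
  · rw [pow_succ]
    exact leftAnn_le_leftAnn_mul _ _
  · rwa [mem_leftAnn, pow_succ, ← mul_assoc]

end IsSemiprimeRing

/-- An element `c` with `l(c²) = l(c)`, where `l` denotes the left annihilator. -/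
def IsLeftAnnStable (c : A) : Prop := ∀ x, x * c * c = 0 → x * c = 0

theorem IsLeftAnnStable.mul_eq_zero_of_mul_add_eq_zero {c a : A} (hc : IsLeftAnnStable c)
    (hac : a * c = 0) {x : A} (hx : x * (c + a) = 0) : x * c = 0 ∧ x * a = 0 := by
  have hxc : x * c = 0 := hc x <| by
    calc x * c * c = x * (c + a) * c - x * (a * c) := by noncomm_ring
      _ = 0 := by rw [hx, hac, zero_mul, mul_zero, sub_zero]
  exact ⟨hxc, by rwa [mul_add, hxc, zero_add] at hx⟩

theorem IsLeftAnnStable.add {c a : A} (hc : IsLeftAnnStable c) (ha : IsLeftAnnStable a)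
    (hac : a * c = 0) : IsLeftAnnStable (c + a) := by
  intro x hx
  obtain ⟨h₁, h₂⟩ := hc.mul_eq_zero_of_mul_add_eq_zero hac hx
  have hxc : x * c = 0 := hc x <| by
    rwa [mul_add, add_mul, mul_assoc x a, hac, mul_zero, add_zero] at h₁
  have hxa : x * a = 0 := ha x <| by
    rwa [mul_add, hxc, zero_add] at h₂
  rw [mul_add, hxc, hxa, add_zero]

theorem IsSemiprimeRing.exists_isLeftAnnStable_mem (hA : IsSemiprimeRing A)
    (hacc : ACCLeftAnnihilators A) {I : Ideal A} {b : A} (hb : b ∈ I) (hb0 : b ≠ 0) :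
    ∃ a ∈ I, a ≠ 0 ∧ IsLeftAnnStable a := by
  obtain ⟨r, hr⟩ : ∃ r, ¬ IsNilpotent (r * b) := by
    by_contra! hcon
    exact hb0 (hA.eq_zero_of_forall_isNilpotent_mul hacc hcon)
  obtain ⟨_, ⟨k, rfl⟩, hmax⟩ := hacc.exists_maximal
    (Set.range_nonempty fun k : ℕ => (r * b) ^ (k + 1))
  refine ⟨(r * b) ^ (k + 1), ?_, fun h0 => hr ⟨_, h0⟩, fun x hx => ?_⟩
  · rw [pow_succ]
    exact I.mul_mem_left _ (I.mul_mem_left _ hb)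
  · refine hmax ((r * b) ^ (k + 1) * (r * b) ^ (k + 1)) ⟨k + 1 + k, pow_add _ (k + 1) (k + 1)⟩
      (leftAnn_le_leftAnn_mul _ _) ?_
    rwa [mem_leftAnn, ← mul_assoc]

/-- A semiprime left Goldie ring. -/
structure IsSemiprimeLeftGoldie (A : Type*) [Ring A] : Prop where
  semiprime : IsSemiprimeRing A
  acc : ACCLeftAnnihilators A
  noInfiniteIndepFamily : NoInfiniteIndepFamily A A

namespace IsSemiprimeLeftGoldie

variable (h : IsSemiprimeLeftGoldie A)
include h

theorem isEssentialIn_range_toSpanSingleton {c : A} (hc : ∀ x, x * c = 0 → x = 0) :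
    IsEssentialIn (LinearMap.range (LinearMap.toSpanSingleton A A c)) ⊤ :=
  h.noInfiniteIndepFamily.isEssentialIn_range ((injective_iff_map_eq_zero _).2 hc)

theorem mem_nonZeroDivisors_of_forall_mul_eq_zero {c : A} (hc : ∀ x, x * c = 0 → x = 0) :
    c ∈ A⁰ := by
  refine ⟨fun x hx => h.semiprime.eq_zero_of_isEssentialIn_leftAnn h.acc fun a ha ha0 => ?_, hc⟩
  obtain ⟨r, ⟨b, hb⟩, hr⟩ := h.isEssentialIn_range_toSpanSingleton hc a ha ha0
  refine ⟨r, ?_, hr⟩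
  rw [mem_leftAnn, ← hb, LinearMap.toSpanSingleton_apply, smul_eq_mul, mul_assoc, hx, mul_zero]

theorem exists_mem_nonZeroDivisors_of_isEssentialIn {E : Ideal A} (hE : IsEssentialIn E ⊤) :
    ∃ c ∈ E, c ∈ A⁰ := by
  obtain ⟨_, ⟨c, ⟨hcE, hc⟩, rfl⟩, hmin⟩ := h.noInfiniteIndepFamily.exists_forall_isEssentialIn
    (T := leftAnn '' {c | c ∈ E ∧ IsLeftAnnStable c})
    ⟨_, 0, ⟨E.zero_mem, by simp [IsLeftAnnStable]⟩, rfl⟩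
  refine ⟨c, hcE, h.mem_nonZeroDivisors_of_forall_mul_eq_zero fun u hu => ?_⟩
  by_contra hu0
  obtain ⟨r, hrE, hr0⟩ := hE u trivial hu0
  obtain ⟨a, ⟨haE, hac⟩, ha0, ha⟩ := h.semiprime.exists_isLeftAnnStable_mem h.acc
    (I := E ⊓ leftAnn c) ⟨hrE, (leftAnn c).smul_mem r hu⟩ hr0
  obtain ⟨s, hs, hs0⟩ := hmin _ ⟨c + a, ⟨E.add_mem hcE haE, hc.add ha hac⟩, rfl⟩
    (fun x hx => (hc.mul_eq_zero_of_mul_add_eq_zero hac hx).1) a hac ha0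
  exact hs0 (ha s (hc.mul_eq_zero_of_mul_add_eq_zero hac hs).2)

theorem exists_mul_eq_mul (a : A) {c : A} (hc : c ∈ A⁰) : ∃ d ∈ A⁰, ∃ b : A, d * a = b * c := by
  obtain ⟨d, ⟨b, hb⟩, hd⟩ := h.exists_mem_nonZeroDivisors_of_isEssentialIn
    ((h.isEssentialIn_range_toSpanSingleton hc.2).comap (LinearMap.toSpanSingleton A A a))
  exact ⟨d, hd, b, hb.symm⟩

end IsSemiprimeLeftGoldie

end Goldie

section LeftOre

variable {R : Type*} [Ring R] {S : Submonoid R} {M : Type*} [AddCommGroup M] [Module R M]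

/-- The left Ore condition for `S` modulo a left ideal `I`. For `I = ⊥` it is the usual one; for
`I` the annihilator of a module it makes closures of submodules with respect to `S` submodules. -/
def IsLeftOreMod (S : Submonoid R) (I : Ideal R) : Prop :=
  ∀ a : R, ∀ s ∈ S, ∃ t ∈ S, ∃ b : R, t * a - b * s ∈ I

theorem IsLeftOreMod.mono {I J : Ideal R} (hI : IsLeftOreMod S I) (hIJ : I ≤ J) :
    IsLeftOreMod S J := by
  intro a s hs
  obtain ⟨t, ht, b, h⟩ := hI a s hs
  exact ⟨t, ht, b, hIJ h⟩

theorem IsLeftOreMod.exists_smul_smul_eq (hS : IsLeftOreMod S (Module.annihilator R M)) (a : R)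
    {s : R} (hs : s ∈ S) : ∃ t ∈ S, ∃ b : R, ∀ m : M, t • a • m = b • s • m := by
  obtain ⟨t, ht, b, h⟩ := hS a s hs
  refine ⟨t, ht, b, fun m => ?_⟩
  simpa only [sub_smul, mul_smul, sub_eq_zero] using Module.mem_annihilator.1 h m

/-- The `S`-closure of `N`: the elements of `M` carried into `N` by some element of `S`. -/
def closureUpTo (hS : IsLeftOreMod S (Module.annihilator R M)) (N : Submodule R M) :
    Submodule R M where
  carrier := {m | ∃ s ∈ S, s • m ∈ N}
  zero_mem' := ⟨1, S.one_mem, by rw [smul_zero]; exact N.zero_mem⟩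
  add_mem' := by
    rintro m m' ⟨s, hs, hm⟩ ⟨s', hs', hm'⟩
    obtain ⟨t, ht, b, htb⟩ := hS.exists_smul_smul_eq s hs'
    refine ⟨t * s, S.mul_mem ht hs, ?_⟩
    rw [smul_add, mul_smul, mul_smul, htb m']
    exact N.add_mem (N.smul_mem _ hm) (N.smul_mem _ hm')
  smul_mem' := by
    rintro a m ⟨s, hs, hm⟩
    obtain ⟨t, ht, b, htb⟩ := hS.exists_smul_smul_eq a hs
    exact ⟨t, ht, by rw [htb]; exact N.smul_mem _ hm⟩

theorem closureUpTo_mono (hS : IsLeftOreMod S (Module.annihilator R M)) :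
    Monotone (closureUpTo hS) :=
  fun _ _ hle _ ⟨s, hs, hm⟩ => ⟨s, hs, hle hm⟩

theorem leUpTo_iff_le_closureUpTo (hS : IsLeftOreMod S (Module.annihilator R M))
    {N N' : Submodule R M} : LeUpTo S N N' ↔ N ≤ closureUpTo hS N' := Iff.rfl

theorem le_closureUpTo (hS : IsLeftOreMod S (Module.annihilator R M)) (N : Submodule R M) :
    N ≤ closureUpTo hS N :=
  fun _ hm => ⟨1, S.one_mem, by rwa [one_smul]⟩

end LeftOre

section ClosedSubmodules

variable {R Rbar : Type*} [Ring R] [Ring Rbar] {π : R →+* Rbar}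
  {M : Type*} [AddCommGroup M] [Module R M]

theorem IsCbarClosedSubmodule.le_of_leUpTo {N N' : Submodule R M} (hN' : IsCbarClosedSubmodule π N')
    (h : LeUpTo (Rbar⁰.comap π) N N') : N ≤ N' := by
  intro m hm
  obtain ⟨c, hc, hcm⟩ := h m hm
  exact hN' c hc m hcm

theorem isCbarClosedSubmodule_closureUpTo
    (hS : IsLeftOreMod (Rbar⁰.comap π) (Module.annihilator R M)) (N : Submodule R M) :
    IsCbarClosedSubmodule π (closureUpTo hS N) := by
  rintro c hc m ⟨s, hs, hsm⟩
  exact ⟨s * c, (Rbar⁰.comap π).mul_mem hs hc, by rwa [mul_smul]⟩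

theorem IsArtinianUpTo.stabilizes_of_isCbarClosedSubmodule
    (h : IsArtinianUpTo (Rbar⁰.comap π) M) (g : ℕ → Submodule R M)
    (hg : ∀ j, IsCbarClosedSubmodule π (g j)) (hanti : ∀ j k, j ≤ k → g k ≤ g j) :
    ∃ n, ∀ k, n ≤ k → g k = g n := by
  obtain ⟨n, hn⟩ := h g fun j k => hanti j k
  exact ⟨n, fun k hk => le_antisymm (hanti n k hk) ((hg k).le_of_leUpTo (hn k hk))⟩

theorem IsNoetherianUpTo.stabilizes_of_isCbarClosedSubmodule
    (h : IsNoetherianUpTo (Rbar⁰.comap π) M) (g : ℕ → Submodule R M)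
    (hg : ∀ j, IsCbarClosedSubmodule π (g j)) (hmono : ∀ j k, j ≤ k → g j ≤ g k) :
    ∃ n, ∀ k, n ≤ k → g k = g n := by
  obtain ⟨n, hn⟩ := h g fun j k => hmono j k
  exact ⟨n, fun k hk => le_antisymm ((hg n).le_of_leUpTo (hn k hk)) (hmono n k hk)⟩

theorem isArtinianUpTo_of_stabilizes
    (hS : IsLeftOreMod (Rbar⁰.comap π) (Module.annihilator R M))
    (h : ∀ g : ℕ → Submodule R M, (∀ j, IsCbarClosedSubmodule π (g j)) →
      (∀ j k, j ≤ k → g k ≤ g j) → ∃ n, ∀ k, n ≤ k → g k = g n) :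
    IsArtinianUpTo (Rbar⁰.comap π) M := by
  intro K hK
  obtain ⟨n, hn⟩ := h (fun j => closureUpTo hS (K j))
    (fun j => isCbarClosedSubmodule_closureUpTo hS _) fun j k hjk => closureUpTo_mono hS (hK hjk)
  refine ⟨n, fun m hm => (leUpTo_iff_le_closureUpTo hS).2 ?_⟩
  rw [hn m hm]
  exact le_closureUpTo hS _

theorem isNoetherianUpTo_of_stabilizes
    (hS : IsLeftOreMod (Rbar⁰.comap π) (Module.annihilator R M))
    (h : ∀ g : ℕ → Submodule R M, (∀ j, IsCbarClosedSubmodule π (g j)) →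
      (∀ j k, j ≤ k → g j ≤ g k) → ∃ n, ∀ k, n ≤ k → g k = g n) :
    IsNoetherianUpTo (Rbar⁰.comap π) M := by
  intro K hK
  obtain ⟨n, hn⟩ := h (fun j => closureUpTo hS (K j))
    (fun j => isCbarClosedSubmodule_closureUpTo hS _) fun j k hjk => closureUpTo_mono hS (hK hjk)
  refine ⟨n, fun m hm => (leUpTo_iff_le_closureUpTo hS).2 ?_⟩
  rw [← hn m hm]
  exact le_closureUpTo hS _

end ClosedSubmodules

namespace IsSemiprimeLeftGoldie

variable {R Rbar : Type*} [Ring R] [Ring Rbar] {π : R →+* Rbar}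
  (h : IsSemiprimeLeftGoldie Rbar) (hπ : Surjective π)
include h hπ

theorem isLeftOreMod_ker : IsLeftOreMod (Rbar⁰.comap π) (RingHom.ker π) := by
  intro a c hc
  obtain ⟨d, hd, b, hdb⟩ := h.exists_mul_eq_mul (π a) hc
  obtain ⟨d, rfl⟩ := hπ d
  obtain ⟨b, rfl⟩ := hπ b
  exact ⟨d, hd, b, by simp [RingHom.mem_ker, hdb]⟩

variable {M : Type*} [AddCommGroup M] [Module R M]
  (hM : RingHom.ker π ≤ Module.annihilator R M)
include hM

theorem leUpTo_of_isEssentialIn {N N' : Submodule R M} (hN : IsEssentialIn N' N) :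
    LeUpTo (Rbar⁰.comap π) N N' := by
  intro x hx
  let E : Ideal R := N'.comap (LinearMap.toSpanSingleton R M x)
  have hE : IsEssentialIn (E.map π) ⊤ := by
    intro a _ ha
    obtain ⟨a, rfl⟩ := hπ a
    obtain hax | hax := eq_or_ne (a • x) 0
    · refine ⟨1, ?_, by rwa [one_smul]⟩
      rw [one_smul]
      exact Ideal.mem_map_of_mem π (show a • x ∈ N' from hax ▸ N'.zero_mem)
    · obtain ⟨r, hr, hr0⟩ := hN (a • x) (N.smul_mem a hx) hax
      rw [← mul_smul] at hr hr0
      refine ⟨π r, ?_, fun h0 => hr0 (Module.mem_annihilator.1 (hM ?_) x)⟩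
      · rw [smul_eq_mul, ← map_mul]
        exact Ideal.mem_map_of_mem π hr
      · rwa [smul_eq_mul, ← map_mul] at h0
  obtain ⟨_, hcE, hc⟩ := h.exists_mem_nonZeroDivisors_of_isEssentialIn hE
  obtain ⟨c, hcx, rfl⟩ := (Ideal.mem_map_iff_of_surjective π hπ).1 hcE
  exact ⟨c, hc, hcx⟩

theorem isArtinianUpTo_of_noInfiniteIndepFamily (hf : NoInfiniteIndepFamily R M) :
    IsArtinianUpTo (Rbar⁰.comap π) M := by
  intro K hK
  obtain ⟨_, ⟨n, rfl⟩, hn⟩ := hf.exists_forall_isEssentialIn (Set.range_nonempty K)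
  exact ⟨n, fun m hm => h.leUpTo_of_isEssentialIn hπ hM (hn _ ⟨m, rfl⟩ (hK hm))⟩

end IsSemiprimeLeftGoldie

section PrimeRadical

variable {R : Type*} [Ring R]

instance : (primeRadical R).IsTwoSided where
  mul_mem_of_left := by
    intro a b ha
    simp only [primeRadical, Submodule.mem_sInf] at *
    exact fun P hP => hP.2.1 a (ha P hP) b

theorem mem_primeRadical_of_forall_mul_mul_mem {a : R}
    (ha : ∀ r, a * r * a ∈ primeRadical R) : a ∈ primeRadical R := by
  simp only [primeRadical, Submodule.mem_sInf] at *
  exact fun P hP => or_self_iff.1 (hP.2.2 a a fun r => ha r P hP)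

theorem primeRadical_le_annihilator_grPiece (i : ℕ) :
    primeRadical R ≤ Module.annihilator R (grPiece R i) := by
  intro a ha
  refine Module.mem_annihilator.2 fun u => ?_
  obtain ⟨x, rfl⟩ := Submodule.mkQ_surjective _ u
  rw [← map_smul, Submodule.mkQ_apply, Submodule.Quotient.mk_eq_zero, Submodule.mem_comap,
    Ideal.IsTwoSided.pow_succ]
  exact Ideal.mul_mem_mul ha x.2

variable {Rbar : Type*} [Ring Rbar] {π : R →+* Rbar} {i : ℕ}

theorem primeRadical_le_annihilator_fMod (π : R →+* Rbar) (i : ℕ) :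
    primeRadical R ≤ Module.annihilator R (fMod π i) :=
  (primeRadical_le_annihilator_grPiece i).trans
    (LinearMap.annihilator_le_of_surjective _ (Submodule.mkQ_surjective _))

theorem exists_fMk_eq (u : fMod π i) :
    ∃ (x : R) (hx : x ∈ primeRadical R ^ i), fMk π i x hx = u := by
  obtain ⟨u, rfl⟩ := Submodule.mkQ_surjective _ u
  obtain ⟨x, rfl⟩ := Submodule.mkQ_surjective _ u
  exact ⟨x, x.2, rfl⟩

theorem isSemiprimeLeftGoldie_of_isLeftGoldie (hπ : Surjective π)
    (hker : RingHom.ker π = primeRadical R) (h : IsLeftGoldie Rbar) :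
    IsSemiprimeLeftGoldie Rbar := by
  refine ⟨fun a ha => ?_, h.1, h.2⟩
  obtain ⟨a, rfl⟩ := hπ a
  rw [← RingHom.mem_ker, hker]
  refine mem_primeRadical_of_forall_mul_mul_mem fun r => ?_
  rw [← hker, RingHom.mem_ker, map_mul, map_mul, ha]

/-- Right multiplication by `c` on `f_i`. -/
def fMulRight (π : R →+* Rbar) (i : ℕ) (c : R) : fMod π i →ₗ[R] fMod π i :=
  Submodule.mapQ _ _
    (Submodule.mapQ _ _
      ((LinearMap.toSpanSingleton R R c).restrict (p := primeRadical R ^ i)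
        (q := primeRadical R ^ i) fun _ hx => Ideal.mul_mem_right c _ hx)
      fun _ hx => Ideal.mul_mem_right c (primeRadical R ^ (i + 1)) hx)
    (Submodule.span_le.2 fun _ ⟨s, hs, hu⟩ =>
      Submodule.subset_span ⟨s, hs, by rw [← map_smul, hu, map_zero]⟩)

theorem fMulRight_fMk (c : R) {x : R} (hx : x ∈ primeRadical R ^ i) :
    fMulRight π i c (fMk π i x hx) = fMk π i (x * c) (Ideal.mul_mem_right c _ hx) := rfl

theorem fMulRight_injective {c : R}
    (h : ∀ (x : R) (hx : x ∈ primeRadical R ^ i) (hxc : x * c ∈ primeRadical R ^ i),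
      fMk π i (x * c) hxc = 0 → fMk π i x hx = 0) : Injective (fMulRight π i c) := by
  refine (injective_iff_map_eq_zero _).2 fun u hu => ?_
  obtain ⟨x, hx, rfl⟩ := exists_fMk_eq u
  exact h x hx _ hu

section

variable (hOre : IsLeftOreMod (Rbar⁰.comap π) (primeRadical R))
include hOre

theorem mem_tauSub_iff {u : grPiece R i} : u ∈ tauSub π i ↔ ∃ s ∈ Rbar⁰.comap π, s • u = 0 := by
  let C : Submodule R (grPiece R i) :=
    closureUpTo (hOre.mono (primeRadical_le_annihilator_grPiece i)) ⊥
  have htau : tauSub π i = C := Submodule.span_eq C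
  rw [htau]
  exact Iff.rfl

theorem fMk_eq_zero_iff {x : R} (hx : x ∈ primeRadical R ^ i) :
    fMk π i x hx = 0 ↔ ∃ s ∈ Rbar⁰.comap π, s * x ∈ primeRadical R ^ (i + 1) := by
  rw [fMk, Submodule.Quotient.mk_eq_zero, mem_tauSub_iff hOre]
  refine exists_congr fun s => and_congr_right fun _ => ?_
  rw [grMk, ← Submodule.Quotient.mk_smul, Submodule.Quotient.mk_eq_zero]
  rfl

theorem eq_zero_of_smul_fMod_eq_zero {s : R} (hs : s ∈ Rbar⁰.comap π) {u : fMod π i}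
    (hu : s • u = 0) : u = 0 := by
  obtain ⟨x, hx, rfl⟩ := exists_fMk_eq u
  obtain ⟨t, ht, htx⟩ := (fMk_eq_zero_iff hOre (Ideal.mul_mem_left _ s hx)).1 hu
  exact (fMk_eq_zero_iff hOre hx).2 ⟨t * s, (Rbar⁰.comap π).mul_mem ht hs, by rwa [mul_assoc]⟩

theorem isArtinianUpTo_grPiece (h : IsArtinianUpTo (Rbar⁰.comap π) (fMod π i)) :
    IsArtinianUpTo (Rbar⁰.comap π) (grPiece R i) := by
  refine IsArtinianUpTo.of_ker_le_range (tauSub π i).subtype (tauSub π i).mkQ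
    (by rw [Submodule.ker_mkQ, Submodule.range_subtype]) (le_refl _)
    (IsArtinianUpTo.of_forall_exists_smul_eq_zero fun u => ?_) h
  obtain ⟨s, hs, hsu⟩ := (mem_tauSub_iff hOre).1 u.2
  exact ⟨s, hs, Subtype.ext hsu⟩

end

namespace IsSemiprimeLeftGoldie

variable (h : IsSemiprimeLeftGoldie Rbar) (hπ : Surjective π)
  (hker : RingHom.ker π = primeRadical R)
include h hπ hker

theorem isLeftOreMod_primeRadical : IsLeftOreMod (Rbar⁰.comap π) (primeRadical R) :=
  hker ▸ h.isLeftOreMod_ker hπ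

theorem isLeftOreMod_annihilator_fMod (i : ℕ) :
    IsLeftOreMod (Rbar⁰.comap π) (Module.annihilator R (fMod π i)) :=
  (h.isLeftOreMod_primeRadical hπ hker).mono (primeRadical_le_annihilator_fMod π i)

theorem isArtinianUpTo_fMod_of_isNoetherianUpTo
    (hN : IsNoetherianUpTo (Rbar⁰.comap π) (fMod π i)) :
    IsArtinianUpTo (Rbar⁰.comap π) (fMod π i) :=
  h.isArtinianUpTo_of_noInfiniteIndepFamily hπ
    (hker.le.trans (primeRadical_le_annihilator_fMod π i)) <|
    hN.noInfiniteIndepFamily fun _ hs _ =>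
      eq_zero_of_smul_fMod_eq_zero (h.isLeftOreMod_primeRadical hπ hker) hs

end IsSemiprimeLeftGoldie

/-- The obstruction `d * a - b * c ∈ n^i` to the left Ore condition modulo `n^(i+1)` is moved into
the image of right multiplication by `c` on `f_i`, where it can be absorbed into `b * c`. -/
theorem IsLeftOreMod.primeRadical_pow_succ
    (hOre : IsLeftOreMod (Rbar⁰.comap π) (primeRadical R))
    (hi : IsLeftOreMod (Rbar⁰.comap π) (primeRadical R ^ i))
    (hart : IsArtinianUpTo (Rbar⁰.comap π) (fMod π i))
    (hinj : ∀ c ∈ Rbar⁰.comap π, Injective (fMulRight π i c)) :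
    IsLeftOreMod (Rbar⁰.comap π) (primeRadical R ^ (i + 1)) := by
  intro a c hc
  obtain ⟨d, hd, b, he⟩ := hi a c hc
  obtain ⟨s, hs, v, hv⟩ := hart.exists_smul_mem_range (hinj c hc) (fMk π i _ he)
  obtain ⟨y, hy, rfl⟩ := exists_fMk_eq v
  have hzero : fMk π i (s * (d * a - b * c) - y * c)
      (sub_mem (Ideal.mul_mem_left _ s he) (Ideal.mul_mem_right c _ hy)) = 0 := by
    rw [fMulRight_fMk] at hv
    exact sub_eq_zero.2 hv.symm
  obtain ⟨t, ht, hmem⟩ := (fMk_eq_zero_iff hOre _).1 hzero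
  have hts : t * s ∈ Rbar⁰.comap π := mul_mem ht hs
  refine ⟨t * s * d, mul_mem hts hd, t * (s * b + y), ?_⟩
  convert hmem using 1
  noncomm_ring

theorem isLeftOreMod_primeRadical_pow
    (hOre : IsLeftOreMod (Rbar⁰.comap π) (primeRadical R))
    (hart : ∀ i, 1 ≤ i → IsArtinianUpTo (Rbar⁰.comap π) (fMod π i))
    (hinj : ∀ i, 1 ≤ i → ∀ c ∈ Rbar⁰.comap π, Injective (fMulRight π i c)) (k : ℕ) :
    IsLeftOreMod (Rbar⁰.comap π) (primeRadical R ^ (k + 1)) := by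
  induction k with
  | zero => rwa [zero_add, Submodule.pow_one]
  | succ k ih => exact hOre.primeRadical_pow_succ ih (hart _ (by omega)) (hinj _ (by omega))

theorem isArtinianUpTo_primeRadical {S : Submonoid R} {k : ℕ} (hk : primeRadical R ^ (k + 1) = ⊥)
    (h : ∀ i, 1 ≤ i → IsArtinianUpTo S (grPiece R i)) : IsArtinianUpTo S (primeRadical R) := by
  have hpow : IsArtinianUpTo S ↥(primeRadical R ^ (0 + 1)) := by
    refine Nat.decreasingInduction (n := k)
      (motive := fun j _ => IsArtinianUpTo S ↥(primeRadical R ^ (j + 1)))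
      (fun j _ ih => ?_) ?_ k.zero_le
    · refine IsArtinianUpTo.of_ker_le_range
        (Submodule.inclusion (Ideal.pow_le_pow_right (j + 1).le_succ)) (Submodule.mkQ _) ?_
        (le_refl S) ih (h (j + 1) (by omega))
      rw [Submodule.ker_mkQ, Submodule.range_inclusion]
    · refine IsArtinianUpTo.of_forall_exists_smul_eq_zero fun x => ⟨1, S.one_mem, ?_⟩
      rw [one_smul]
      exact Subtype.ext ((Submodule.mem_bot R).1 (hk ▸ x.2))
  rwa [zero_add, Submodule.pow_one] at hpow

end PrimeRadical

section Sufficiency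

section Localization

variable {R : Type*} [Ring R] {S : Submonoid R} {Q : Type*} [Ring Q] {φ : R →+* Q}
  (hunit : ∀ s ∈ S, IsUnit (φ s)) (hden : ∀ q : Q, ∃ s ∈ S, ∃ r, φ s * q = φ r)
include hunit hden

theorem IsArtinianUpTo.isArtinianRing (h : IsArtinianUpTo S R) : IsArtinianRing Q := by
  refine monotone_stabilizes_iff_artinian.1 fun I => ?_
  obtain ⟨n, hn⟩ := h (fun j => Ideal.comap φ (OrderDual.ofDual (I j)))
    fun j k hjk => Ideal.comap_mono (I.monotone hjk)
  refine ⟨n, fun m hm => le_antisymm (I.monotone hm) fun q hq => ?_⟩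
  obtain ⟨c, hc, r, hr⟩ := hden q
  have hrq : r ∈ Ideal.comap φ (OrderDual.ofDual (I n)) := by
    rw [Ideal.mem_comap, ← hr]
    exact Ideal.mul_mem_left _ _ hq
  obtain ⟨s, hs, hsr⟩ := hn m hm r hrq
  rw [smul_eq_mul, Ideal.mem_comap, map_mul, ← hr] at hsr
  exact (Ideal.unit_mul_mem_iff_mem _ (hunit c hc)).1
    ((Ideal.unit_mul_mem_iff_mem _ (hunit s hs)).1 hsr)

theorem isLeftQuotRing_of_isArtinianRing [IsArtinianRing Q] (hinj : Injective φ) (hS : S ≤ R⁰) :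
    IsLeftQuotRing φ where
  inj := hinj
  isUnit c hc := by
    refine IsArtinianRing.isUnit_iff_isRightRegular.2 ?_
    rw [isRightRegular_iff_mem_nonZeroDivisorsRight]
    intro q hq
    obtain ⟨s, hs, r, hr⟩ := hden q
    have hrc : r * c = 0 := hinj (by rw [map_mul, ← hr, mul_assoc, hq, mul_zero, map_zero])
    rw [hc.2 r hrc, map_zero] at hr
    exact (hunit s hs).mul_right_eq_zero.1 hr
  denom q := by
    obtain ⟨s, hs, r, hr⟩ := hden q
    exact ⟨s, r, hS hs, hr⟩

end Localization

theorem IsArtinianUpTo.hasArtinianLeftQuot {R : Type u} [Ring R] {S : Submonoid R}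
    (h : IsArtinianUpTo S R) (hOre : IsLeftOreMod S (⊥ : Ideal R)) (hS : S ≤ R⁰) :
    HasArtinianLeftQuot R := by
  obtain ⟨hOreSet⟩ : Nonempty (OreLocalization.OreSet S) := by
    rw [OreLocalization.nonempty_oreSet_iff]
    refine ⟨fun r₁ r₂ s hrs => ⟨1, ?_⟩, fun r s => ?_⟩
    · rw [sub_eq_zero.1 ((hS s.2).2 (r₁ - r₂) (by rw [sub_mul, hrs, sub_self]))]
    · obtain ⟨t, ht, b, htb⟩ := hOre r s s.2
      exact ⟨b, ⟨t, ht⟩, sub_eq_zero.1 ((Submodule.mem_bot R).1 htb)⟩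
  let φ : R →+* OreLocalization S R := OreLocalization.numeratorRingHom
  have hunit : ∀ s ∈ S, IsUnit (φ s) := fun s hs => OreLocalization.numerator_isUnit ⟨s, hs⟩
  have hden : ∀ q, ∃ s ∈ S, ∃ r, φ s * q = φ r := fun q => by
    induction q using OreLocalization.ind with
    | _ r s => exact ⟨s, s.2, r, OreLocalization.mul_cancel⟩
  have hinj : Injective φ := OreLocalization.numeratorHom_inj fun s hs => (hS hs).1
  have hart : IsArtinianRing (OreLocalization S R) := h.isArtinianRing hunit hden
  exact ⟨⟨_, φ, isLeftQuotRing_of_isArtinianRing hunit hden hinj hS⟩, hart⟩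

theorem IsSemiprimeLeftGoldie.hasArtinianLeftQuot {R : Type u} [Ring R] {Rbar : Type v}
    [Ring Rbar] {π : R →+* Rbar} (h : IsSemiprimeLeftGoldie Rbar) (hπ : Surjective π)
    (hker : RingHom.ker π = primeRadical R) (hnil : IsNilpotentIdeal (primeRadical R))
    (hreg : Rbar⁰.comap π ≤ R⁰)
    (hinj : ∀ i, 1 ≤ i → ∀ c ∈ Rbar⁰.comap π, Injective (fMulRight π i c))
    (hart : ∀ i, 1 ≤ i → IsArtinianUpTo (Rbar⁰.comap π) (fMod π i)) :
    HasArtinianLeftQuot R := by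
  obtain ⟨k, hk⟩ := hnil
  have hOre := h.isLeftOreMod_primeRadical hπ hker
  have hRbar : IsArtinianUpTo Rbar⁰ Rbar :=
    h.isArtinianUpTo_of_noInfiniteIndepFamily (π := RingHom.id Rbar) surjective_id
      (fun a ha => (show a = 0 from ha) ▸ zero_mem _) h.noInfiniteIndepFamily
  have hR : IsArtinianUpTo (Rbar⁰.comap π) R := by
    have : RingHomSurjective π := ⟨hπ⟩
    refine IsArtinianUpTo.of_ker_le_range (primeRadical R).subtype π.toSemilinearMap ?_ le_rfl
      (isArtinianUpTo_primeRadical hk fun i hi => isArtinianUpTo_grPiece hOre (hart i hi)) hRbar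
    rw [Submodule.range_subtype, ← hker]
    exact le_rfl
  exact hR.hasArtinianLeftQuot (hk ▸ isLeftOreMod_primeRadical_pow hOre hart hinj k) hreg

end Sufficiency

section Necessity

section PrimeRadicalNilpotent

variable {R : Type*} [Ring R]

theorem isPrimeNC_annihilator (V : Type*) [AddCommGroup V] [Module R V] [IsSimpleModule R V] :
    (Module.annihilator R V).IsPrimeNC := by
  refine ⟨fun h => ?_, fun a ha r => Ideal.mul_mem_right r _ ha, fun a b hab => ?_⟩
  · have := IsSimpleModule.nontrivial R V
    obtain ⟨v, hv⟩ := exists_ne (0 : V)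
    exact hv (by simpa using Module.mem_annihilator.1 (h ▸ Submodule.mem_top : (1 : R) ∈ _) v)
  · by_contra! hcon
    simp only [Module.mem_annihilator, not_forall] at hcon
    obtain ⟨⟨v, hv⟩, w, hw⟩ := hcon
    obtain ⟨r, hr⟩ := IsSimpleModule.toSpanSingleton_surjective R hw v
    refine hv ?_
    rw [← hr, LinearMap.toSpanSingleton_apply]
    simpa only [mul_smul] using Module.mem_annihilator.1 (hab r) w

theorem primeRadical_le_jacobson : primeRadical R ≤ Ring.jacobson R := by
  rw [Ring.jacobson_eq_sInf_isMaximal]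
  refine le_sInf fun M hM => ?_
  have : IsSimpleModule R (R ⧸ M) := isSimpleModule_iff_isCoatom.2 (Ideal.isMaximal_def.1 hM)
  intro a ha
  have h1 := Module.mem_annihilator.1 (Submodule.mem_sInf.1 ha _ (isPrimeNC_annihilator (R ⧸ M)))
    (Submodule.Quotient.mk 1)
  rwa [← Submodule.Quotient.mk_smul, smul_eq_mul, mul_one, Submodule.Quotient.mk_eq_zero] at h1

theorem isNilpotent_primeRadical [IsSemiprimaryRing R] : IsNilpotent (primeRadical R) := by
  obtain ⟨k, hk⟩ := IsSemiprimaryRing.isNilpotent (R := R)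
  exact ⟨k, le_bot_iff.1 ((Ideal.pow_right_mono primeRadical_le_jacobson k).trans hk.le)⟩

theorem le_primeRadical_of_isNilpotent {I : Ideal R} (hI : IsNilpotent I) :
    I ≤ primeRadical R := by
  refine le_sInf fun P hP => ?_
  obtain ⟨k, hk⟩ := hI
  replace hk : I ^ k ≤ P := hk.trans_le bot_le
  induction k with
  | zero =>
    rw [Submodule.pow_zero, Ideal.one_eq_top, top_le_iff] at hk
    exact absurd hk hP.1
  | succ k ih =>
    by_contra! hcon
    obtain ⟨b, hb, hbP⟩ := SetLike.not_le_iff_exists.1 hcon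
    refine hcon (ih fun a ha => ?_)
    refine (hP.2.2 a b fun r => hk ?_).resolve_right hbP
    rw [Submodule.pow_succ, mul_assoc]
    exact Ideal.mul_mem_mul ha (Ideal.mul_mem_left _ r hb)

end PrimeRadicalNilpotent

theorem IsArtinianUpTo.exists_mul_eq_mul {R : Type*} [Ring R] {S : Submonoid R}
    (h : IsArtinianUpTo S R) {I : Ideal R} {a c : R} (ha : a ∈ I) (hIc : ∀ x ∈ I, x * c ∈ I)
    (hc : ∀ x ∈ I, x * c = 0 → x = 0) : ∃ s ∈ S, ∃ z ∈ I, s * a = z * c := by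
  have hinj : Injective ((LinearMap.toSpanSingleton R R c).restrict hIc) :=
    (injective_iff_map_eq_zero _).2 fun x hx => Subtype.ext (hc x x.2 (congrArg Subtype.val hx))
  obtain ⟨s, hs, z, hz⟩ := (h.of_injective I.subtype I.injective_subtype).exists_smul_mem_range
    hinj ⟨a, ha⟩
  exact ⟨s, hs, z, z.2, (congrArg Subtype.val hz).symm⟩

theorem IsNoetherianUpTo.isLeftGoldie {A : Type*} [Ring A] (h : IsNoetherianUpTo A⁰ A) :
    IsLeftGoldie A := by
  refine ⟨fun f hf hmono => ?_, h.noInfiniteIndepFamily fun s hs => hs.1⟩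
  choose T hT using hf
  have hmem (i : ℕ) {r : A} : r ∈ ⨅ s ∈ T i, leftAnn s ↔ r ∈ f i := by
    simp [hT i]
  obtain ⟨n, hn⟩ := h (fun i => ⨅ s ∈ T i, leftAnn s) fun i j hij r hr =>
    (hmem j).2 (hmono i j hij ((hmem i).1 hr))
  refine ⟨n, fun k hk => (hmono n k hk).antisymm' fun r hr => ?_⟩
  obtain ⟨c, hc, hcr⟩ := hn k hk r ((hmem k).2 hr)
  rw [hmem, hT n, smul_eq_mul] at hcr
  rw [hT n]
  exact fun s hs => hc.1 _ (by rw [← mul_assoc, hcr s hs])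

theorem comap_pow_le_comap_pow {R Q : Type*} [Ring R] [Ring Q] (φ : R →+* Q) (I : Ideal Q) (k : ℕ) :
    (I.comap φ) ^ k ≤ (I ^ k).comap φ := by
  induction k with
  | zero => simp only [Submodule.pow_zero, Ideal.one_eq_top, Ideal.comap_top, le_refl]
  | succ k ih =>
    rw [Submodule.pow_succ, Submodule.pow_succ, Ideal.mul_le]
    intro a ha b hb
    rw [Ideal.mem_comap, map_mul]
    exact Ideal.mul_mem_mul (ih ha) hb

namespace IsLeftQuotRing

variable {R Q : Type*} [Ring R] [Ring Q] {φ : R →+* Q} (h : IsLeftQuotRing φ)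
include h

theorem exists_map_mul_eq (p : Q) {c : R} (hc : c ∈ R⁰) :
    ∃ d ∈ R⁰, ∃ r, φ d * p = φ r * φ c := by
  obtain ⟨u, hu⟩ := h.isUnit c hc
  obtain ⟨d, r, hd, hdr⟩ := h.denom (p * ↑u⁻¹)
  exact ⟨d, hd, r, by rw [← hdr, ← hu, mul_assoc, Units.inv_mul_cancel_right]⟩

theorem exists_map_mul_eq_of_mem_map {I : Ideal R} {q : Q} (hq : q ∈ I.map φ) :
    ∃ c ∈ R⁰, ∃ a ∈ I, φ c * q = φ a := by
  induction hq using Submodule.span_induction with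
  | mem q hq =>
    obtain ⟨a, ha, rfl⟩ := hq
    exact ⟨1, one_mem _, a, ha, by rw [map_one, one_mul]⟩
  | zero => exact ⟨1, one_mem _, 0, I.zero_mem, by simp⟩
  | add q q' _ _ ih ih' =>
    obtain ⟨c, hc, a, ha, hca⟩ := ih
    obtain ⟨c', hc', a', ha', hca'⟩ := ih'
    obtain ⟨d, hd, r, hdr⟩ := h.exists_map_mul_eq (φ c) hc'
    refine ⟨d * c, mul_mem hd hc, d * a + r * a',
      add_mem (I.mul_mem_left d ha) (I.mul_mem_left r ha'), ?_⟩
    calc φ (d * c) * (q + q') = φ d * (φ c * q) + φ d * φ c * q' := by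
          rw [map_mul, mul_add, mul_assoc]
      _ = φ (d * a + r * a') := by
          rw [hca, hdr, mul_assoc (φ r), hca', ← map_mul, ← map_mul, ← map_add]
  | smul p q _ ih =>
    obtain ⟨c, hc, a, ha, hca⟩ := ih
    obtain ⟨d, hd, r, hdr⟩ := h.exists_map_mul_eq p hc
    refine ⟨d, hd, r * a, I.mul_mem_left r ha, ?_⟩
    rw [smul_eq_mul, ← mul_assoc, hdr, mul_assoc, hca, map_mul]

theorem leUpTo_of_map_le {I J : Ideal R} (hIJ : I.map φ ≤ J.map φ) : LeUpTo R⁰ I J := by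
  intro x hx
  obtain ⟨c, hc, a, ha, hca⟩ :=
    h.exists_map_mul_eq_of_mem_map (hIJ (Ideal.mem_map_of_mem φ hx))
  rw [← map_mul] at hca
  exact ⟨c, hc, (h.inj hca : c • x = a) ▸ ha⟩

theorem isArtinianUpTo [IsArtinianRing Q] : IsArtinianUpTo R⁰ R := by
  intro K hK
  obtain ⟨n, hn⟩ := IsArtinian.monotone_stabilizes (R := Q) (M := Q)
    ⟨fun i => OrderDual.toDual (Ideal.map φ (K i)), fun i j hij => Ideal.map_mono (hK hij)⟩
  exact ⟨n, fun m hm => h.leUpTo_of_map_le (hn m hm).ge⟩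

theorem isNoetherianUpTo [IsNoetherianRing Q] : IsNoetherianUpTo R⁰ R := by
  intro K hK
  obtain ⟨n, hn⟩ := monotone_stabilizes_iff_noetherian.2 ‹IsNoetherianRing Q›
    ⟨fun i => Ideal.map φ (K i), fun i j hij => Ideal.map_mono (hK hij)⟩
  exact ⟨n, fun m hm => h.leUpTo_of_map_le (hn m hm).ge⟩

theorem mem_nonZeroDivisors_iff_isUnit_map {c : R} :
    c ∈ R⁰ ↔ IsUnit (φ c) :=
  ⟨h.isUnit c, fun hc => comap_nonZeroDivisors_le_of_injective h.inj hc.mem_nonZeroDivisors⟩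

variable [IsArtinianRing Q]

/-- For `a ∈ I := {x | x R b ⊆ φ⁻¹P}` the Ore-type relation `s * a = z * c` may be chosen with
`z ∈ I`, which moves the denominator `c` of an element of `Q` past `a`. -/
theorem isPrimeNC_comap {P : Ideal Q} (hP : P.IsPrimeNC) : (P.comap φ).IsPrimeNC := by
  have : P.IsTwoSided := ⟨fun r ha => hP.2.1 _ ha r⟩
  refine ⟨Ideal.comap_ne_top φ hP.1, fun a ha r => Ideal.mul_mem_right r _ ha, fun a b hab => ?_⟩
  refine hP.2.2 (φ a) (φ b) fun q => ?_
  let I : Ideal R := ⨅ r : R, Submodule.comap (LinearMap.toSpanSingleton R R (r * b)) (P.comap φ)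
  have hI {x : R} : x ∈ I ↔ ∀ r, φ (x * (r * b)) ∈ P := by simp [I]
  obtain ⟨c, r, hc, hcr⟩ := h.denom q
  obtain ⟨s, hs, z, hz, hsz⟩ := h.isArtinianUpTo.exists_mul_eq_mul (I := I) (c := c)
    (hI.2 fun r => by simpa [mul_assoc] using hab r)
    (fun x hx => hI.2 fun r => by simpa [mul_assoc] using hI.1 hx (c * r)) fun x _ => hc.2 x
  have heq : φ s * (φ a * q * φ b) = φ (z * (r * b)) := by
    calc φ s * (φ a * q * φ b) = φ (s * a) * (q * φ b) := by
          rw [map_mul]; noncomm_ring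
      _ = φ z * (φ c * q) * φ b := by rw [hsz, map_mul]; noncomm_ring
      _ = φ (z * (r * b)) := by rw [hcr, map_mul, map_mul, mul_assoc]
  rw [← Ideal.unit_mul_mem_iff_mem _ (h.isUnit s hs), heq]
  exact hI.1 hz r

theorem isNilpotent_comap_primeRadical : IsNilpotent ((primeRadical Q).comap φ) := by
  obtain ⟨k, hk⟩ := isNilpotent_primeRadical (R := Q)
  refine ⟨k, le_bot_iff.1 ((comap_pow_le_comap_pow φ _ k).trans ?_)⟩
  rw [hk]
  exact ((RingHom.injective_iff_ker_eq_bot φ).1 h.inj).le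

theorem primeRadical_eq_comap : primeRadical R = (primeRadical Q).comap φ := by
  refine le_antisymm (fun x hx => ?_)
    (le_primeRadical_of_isNilpotent h.isNilpotent_comap_primeRadical)
  simp only [primeRadical, Ideal.mem_comap, Submodule.mem_sInf] at *
  exact fun P hP => hx _ (h.isPrimeNC_comap hP)

theorem isNilpotentIdeal_primeRadical : IsNilpotentIdeal (primeRadical R) := by
  obtain ⟨k, hk⟩ := h.isNilpotent_comap_primeRadical
  rw [← h.primeRadical_eq_comap] at hk
  exact ⟨k, le_bot_iff.1 ((Ideal.pow_le_pow_right k.le_succ).trans hk.le)⟩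

theorem isUnit_of_sub_mem_primeRadical {s x : R} (hs : s ∈ R⁰) (hsx : s - x ∈ primeRadical R) :
    IsUnit (φ x) := by
  obtain ⟨u, hu⟩ := h.isUnit s hs
  obtain ⟨k, hk⟩ := isNilpotent_primeRadical (R := Q)
  have hmem : ↑u⁻¹ * φ (s - x) ∈ primeRadical Q :=
    Ideal.mul_mem_left _ _ (h.primeRadical_eq_comap ▸ hsx :)
  have hnil : IsNilpotent (↑u⁻¹ * φ (s - x)) :=
    ⟨k, (Submodule.mem_bot Q).1 (hk.le (Ideal.pow_mem_pow hmem k))⟩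
  have hx : φ x = u * (1 - ↑u⁻¹ * φ (s - x)) := by
    rw [mul_sub, Units.mul_inv_cancel_left, map_sub, hu, mul_one, sub_sub_cancel]
  exact hx ▸ u.isUnit.mul hnil.isUnit_one_sub

variable {Rbar : Type*} [Ring Rbar] {π : R →+* Rbar} (hπ : Surjective π)
  (hker : RingHom.ker π = primeRadical R)
include hπ hker

theorem nonZeroDivisors_le_comap : R⁰ ≤ Rbar⁰.comap π := by
  intro c hc
  obtain ⟨u, hu⟩ := h.isUnit c hc
  have hπ0 {x : R} : π x = 0 ↔ φ x ∈ primeRadical Q := by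
    rw [← RingHom.mem_ker, hker, h.primeRadical_eq_comap, Ideal.mem_comap]
  refine ⟨fun x hx => ?_, fun x hx => ?_⟩ <;> obtain ⟨x, rfl⟩ := hπ x <;>
    rw [← map_mul, hπ0, map_mul, ← hu] at hx <;> rw [hπ0]
  · rwa [← Ideal.unit_mul_mem_iff_mem _ u.isUnit]
  · rw [← Units.mul_inv_cancel_right (φ x) u]
    exact Ideal.mul_mem_right _ _ hx

theorem comap_nonZeroDivisors_eq : Rbar⁰.comap π = R⁰ := by
  refine le_antisymm (fun c hc => ?_) (h.nonZeroDivisors_le_comap hπ hker)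
  have hRbar : IsArtinianUpTo (R⁰.map π) Rbar :=
    h.isArtinianUpTo.of_surjective π.toSemilinearMap hπ (Submonoid.le_comap_map _)
  obtain ⟨_, ⟨s, hs, rfl⟩, z, -, hsz⟩ := hRbar.exists_mul_eq_mul (I := ⊤) (a := 1) (c := π c)
    trivial (fun _ _ => trivial) fun x _ => hc.2 x
  obtain ⟨z, rfl⟩ := hπ z
  have hzc : IsUnit (φ (z * c)) := h.isUnit_of_sub_mem_primeRadical hs <| by
    rw [← hker, RingHom.mem_ker, map_sub, map_mul, ← hsz, mul_one, sub_self]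
  rw [map_mul] at hzc
  exact h.mem_nonZeroDivisors_iff_isUnit_map.2 (isUnit_of_mul_isUnit_right hzc)

theorem isLeftGoldie : IsLeftGoldie Rbar :=
  IsNoetherianUpTo.isLeftGoldie <| h.isNoetherianUpTo.of_surjective π.toSemilinearMap hπ
    (h.nonZeroDivisors_le_comap hπ hker)

theorem isArtinianUpTo_fMod (i : ℕ) : IsArtinianUpTo (Rbar⁰.comap π) (fMod π i) := by
  rw [h.comap_nonZeroDivisors_eq hπ hker]
  have hpow := h.isArtinianUpTo.of_injective _ (primeRadical R ^ i).injective_subtype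
  exact (hpow.of_surjective _ (Submodule.mkQ_surjective _) le_rfl).of_surjective _
    (Submodule.mkQ_surjective _) le_rfl

theorem isNoetherianUpTo_fMod (i : ℕ) : IsNoetherianUpTo (Rbar⁰.comap π) (fMod π i) := by
  rw [h.comap_nonZeroDivisors_eq hπ hker]
  have hpow := h.isNoetherianUpTo.of_injective _ (primeRadical R ^ i).injective_subtype
  exact (hpow.of_surjective _ (Submodule.mkQ_surjective _) le_rfl).of_surjective _
    (Submodule.mkQ_surjective _) le_rfl

theorem fMk_eq_zero_of_fMk_mul_eq_zero {i : ℕ} {c : R} (hc : c ∈ Rbar⁰.comap π) {x : R}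
    (hx : x ∈ primeRadical R ^ i) (hxc : x * c ∈ primeRadical R ^ i)
    (h0 : fMk π i (x * c) hxc = 0) : fMk π i x hx = 0 := by
  have hOre := (isSemiprimeLeftGoldie_of_isLeftGoldie hπ hker
    (h.isLeftGoldie hπ hker)).isLeftOreMod_primeRadical hπ hker
  have hreg := h.comap_nonZeroDivisors_eq hπ hker
  obtain ⟨t, ht, htx⟩ := (fMk_eq_zero_iff hOre hxc).1 h0
  have hc' : c ∈ R⁰ := hreg ▸ hc
  obtain ⟨s, hs, z, hz, hsz⟩ := h.isArtinianUpTo.exists_mul_eq_mul htx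
    (fun y hy => Ideal.mul_mem_right c _ hy) fun y _ => hc'.2 y
  have hstx : s * t * x = z := by
    refine sub_eq_zero.1 (hc'.2 _ ?_)
    rw [sub_mul, ← hsz, mul_assoc, mul_assoc, sub_self]
  exact (fMk_eq_zero_iff hOre hx).2 ⟨s * t, mul_mem (hreg ▸ hs) ht, hstx ▸ hz⟩

end IsLeftQuotRing

end Necessity

/-- **Corollary (`a9Sep12`).**  Let `R` be a ring, `n` its prime radical, `R̄ = R/n`
(realized by a surjective `π` with kernel `n`).  `R` has a left Artinian left quotient ring
iff the conditions (a) `R̄` is a left Goldie ring, (b) `n` is nilpotent, (c) `C' ⊆ C`,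
(e) right multiplication by each `c̄ ∈ C̄` on `f_i` (`i ≥ 1`) is injective, hold together
with (d1) each `f_i`, `i ≥ 1`, satisfies the ACC on `C̄`-closed submodules; and likewise
with (d1) replaced by (d2), the DCC on `C̄`-closed submodules. -/
theorem left_artinian_left_quotient_ring_criterion_closed_chains
    {R : Type u} [Ring R] (Rbar : Type v) [Ring Rbar] (π : R →+* Rbar)
    (hπsurj : Function.Surjective π) (hπker : RingHom.ker π = primeRadical R) :
    (HasArtinianLeftQuot R ↔
      (IsLeftGoldie Rbar ∧
        IsNilpotentIdeal (primeRadical R) ∧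
        (∀ c : R, IsRegElem (π c) → IsRegElem c) ∧
        (∀ i : ℕ, 1 ≤ i →
          ∀ c : R, IsRegElem (π c) →
            ∀ (x : R) (hx : x ∈ primeRadical R ^ i) (hxc : x * c ∈ primeRadical R ^ i),
              fMk π i (x * c) hxc = 0 → fMk π i x hx = 0) ∧
        (∀ i : ℕ, 1 ≤ i →
          ∀ g : ℕ → Submodule R (fMod π i), (∀ j, IsCbarClosedSubmodule π (g j)) →
            (∀ j k, j ≤ k → g j ≤ g k) → ∃ N, ∀ k, N ≤ k → g k = g N))) ∧
    (HasArtinianLeftQuot R ↔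
      (IsLeftGoldie Rbar ∧
        IsNilpotentIdeal (primeRadical R) ∧
        (∀ c : R, IsRegElem (π c) → IsRegElem c) ∧
        (∀ i : ℕ, 1 ≤ i →
          ∀ c : R, IsRegElem (π c) →
            ∀ (x : R) (hx : x ∈ primeRadical R ^ i) (hxc : x * c ∈ primeRadical R ^ i),
              fMk π i (x * c) hxc = 0 → fMk π i x hx = 0) ∧
        (∀ i : ℕ, 1 ≤ i →
          ∀ g : ℕ → Submodule R (fMod π i), (∀ j, IsCbarClosedSubmodule π (g j)) →
            (∀ j k, j ≤ k → g k ≤ g j) → ∃ N, ∀ k, N ≤ k → g k = g N))) := by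
  refine ⟨⟨?_, ?_⟩, ⟨?_, ?_⟩⟩
  · rintro ⟨⟨Q, φ, h⟩, hQ⟩
    exact ⟨h.isLeftGoldie hπsurj hπker, h.isNilpotentIdeal_primeRadical,
      fun _ hc => (h.comap_nonZeroDivisors_eq hπsurj hπker).le hc,
      fun i _ c hc x hx hxc => h.fMk_eq_zero_of_fMk_mul_eq_zero hπsurj hπker hc hx hxc,
      fun i _ => (h.isNoetherianUpTo_fMod hπsurj hπker i).stabilizes_of_isCbarClosedSubmodule⟩
  · rintro ⟨hgoldie, hnil, hreg, hinj, hacc⟩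
    have h := isSemiprimeLeftGoldie_of_isLeftGoldie hπsurj hπker hgoldie
    exact h.hasArtinianLeftQuot hπsurj hπker hnil hreg
      (fun i hi c hc => fMulRight_injective (hinj i hi c hc)) fun i hi =>
      h.isArtinianUpTo_fMod_of_isNoetherianUpTo hπsurj hπker <|
        isNoetherianUpTo_of_stabilizes (h.isLeftOreMod_annihilator_fMod hπsurj hπker i) (hacc i hi)
  · rintro ⟨⟨Q, φ, h⟩, hQ⟩
    exact ⟨h.isLeftGoldie hπsurj hπker, h.isNilpotentIdeal_primeRadical,
      fun _ hc => (h.comap_nonZeroDivisors_eq hπsurj hπker).le hc,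
      fun i _ c hc x hx hxc => h.fMk_eq_zero_of_fMk_mul_eq_zero hπsurj hπker hc hx hxc,
      fun i _ => (h.isArtinianUpTo_fMod hπsurj hπker i).stabilizes_of_isCbarClosedSubmodule⟩
  · rintro ⟨hgoldie, hnil, hreg, hinj, hdcc⟩
    have h := isSemiprimeLeftGoldie_of_isLeftGoldie hπsurj hπker hgoldie
    exact h.hasArtinianLeftQuot hπsurj hπker hnil hreg
      (fun i hi c hc => fMulRight_injective (hinj i hi c hc)) fun i hi =>
      isArtinianUpTo_of_stabilizes (h.isLeftOreMod_annihilator_fMod hπsurj hπker i) (hdcc i hi)
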